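/- Let K' = [K,K] be the derived subgroup of the kneading group K. For every letter z ∈ ℤ and every g ∈ K there exists h ∈ K' whose section at the length-one word z satisfies h|_z = g. -/

import Mathlib

/-- States of the kneading automaton: `a i` is the paper's `a_{i+1}` (for `i < k`),
`b i` is the paper's `b_{i+1}` (for `i < p`), and `id` is the identity state. -/
inductive KState : Type
  | a (i : ℕ)
  | b (i : ℕ)
  | id
  deriving DecidableEq

/-- Transition function of the kneading automaton `𝒦(x₁…x_k, y₁…y_p)`, where the paper's
`x_i` is `x (i-1)` and `y_i` is `y (i-1)`.  `KTrans k p x y s z = (output letter, restriction)`. -/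
def KTrans (k p : ℕ) (x y : ℕ → ℤ) : KState → ℤ → ℤ × KState
  | .a 0, z => (z + 1, .id)
  | .a (i+1), z => if z = x i then (z, .a i) else (z, .id)
  | .b 0, z =>
      if z = x (k-1) then (z, .a (k-1))
      else if z = y (p-1) then (z, .b (p-1))
      else (z, .id)
  | .b (i+1), z => if z = y i then (z, .b i) else (z, .id)
  | .id, z => (z, .id)

/-- The action of a state on the tree `ℤ*` of finite words over `ℤ`,
defined recursively by `q(zv) = q(z)·(q|_z)(v)`. -/
def stateAct (k p : ℕ) (x y : ℕ → ℤ) : KState → List ℤ → List ℤ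
  | _, [] => []
  | s, z :: v => (KTrans k p x y s z).1 :: stateAct k p x y (KTrans k p x y s z).2 v

/-- The generating states `S = {a₁,…,a_k, b₁,…,b_p}`. -/
def IsGen (k p : ℕ) (s : KState) : Prop :=
  (∃ i, i < k ∧ s = .a i) ∨ (∃ j, j < p ∧ s = .b j)

/-- The generators of the kneading group, as permutations of `List ℤ` whose underlying
function is the action of a generating state. -/
def SGens (k p : ℕ) (x y : ℕ → ℤ) : Set (Equiv.Perm (List ℤ)) :=
  {g | ∃ s : KState, IsGen k p s ∧ ⇑g = stateAct k p x y s}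

/-- The kneading group `K = 𝕂(x₁…x_k, y₁…y_p)`. -/
def Kgroup (k p : ℕ) (x y : ℕ → ℤ) : Subgroup (Equiv.Perm (List ℤ)) :=
  Subgroup.closure (SGens k p x y)

theorem stateAct_id (k p : ℕ) (x y : ℕ → ℤ) (w : List ℤ) :
    stateAct k p x y .id w = w := by
  induction w with
  | nil => simp [stateAct]
  | cons z v ih => simp [stateAct, KTrans, ih]

theorem KTrans_fst (k p : ℕ) (x y : ℕ → ℤ) (s : KState) (hs : s ≠ .a 0) (z : ℤ) :
    (KTrans k p x y s z).1 = z := by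
  rcases s with (_ | i) | (_ | i) | _ <;> simp only [KTrans] <;> first | contradiction | skip
  all_goals (try split_ifs) <;> rfl

theorem stateAct_inj (k p : ℕ) (x y : ℕ → ℤ) (w : List ℤ) :
    ∀ (s : KState) (w' : List ℤ), stateAct k p x y s w = stateAct k p x y s w' → w = w' := by
  induction w with
  | nil => intro s w' h; cases w' <;> simp_all [stateAct]
  | cons z v ih =>
    intro s w' h
    cases w' with
    | nil => simp [stateAct] at h
    | cons z' v' =>
      simp only [stateAct, List.cons.injEq] at h
      obtain ⟨h1, h2⟩ := h
      have hz : z = z' := by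
        by_cases hs : s = .a 0
        · subst hs; simpa [KTrans] using h1
        · rwa [KTrans_fst _ _ _ _ _ hs, KTrans_fst _ _ _ _ _ hs] at h1
      subst hz
      rw [ih _ _ h2]

theorem stateAct_surj (k p : ℕ) (x y : ℕ → ℤ) (w : List ℤ) :
    ∀ s : KState, ∃ w', stateAct k p x y s w' = w := by
  induction w with
  | nil => intro s; exact ⟨[], by simp [stateAct]⟩
  | cons z v ih =>
    intro s
    have hz : ∃ z', (KTrans k p x y s z').1 = z := by
      by_cases hs : s = .a 0
      · subst hs; exact ⟨z - 1, by simp [KTrans]⟩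
      · exact ⟨z, KTrans_fst _ _ _ _ _ hs _⟩
    obtain ⟨z', hz⟩ := hz
    obtain ⟨v', hv⟩ := ih (KTrans k p x y s z').2
    exact ⟨z' :: v', by simp [stateAct, hz, hv]⟩

theorem exists_perm (k p : ℕ) (x y : ℕ → ℤ) (s : KState) :
    ∃ g : Equiv.Perm (List ℤ), ⇑g = stateAct k p x y s :=
  ⟨Equiv.ofBijective (stateAct k p x y s)
    ⟨fun w w' h => stateAct_inj k p x y w s w' h, fun w => stateAct_surj k p x y w s⟩, rfl⟩

/-- Every generator is a section of a generator fixing the first level. -/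
theorem exists_parent (k p : ℕ) (hk : 1 ≤ k) (hp : 1 ≤ p) (x y : ℕ → ℤ)
    (hxy : x (k - 1) ≠ y (p - 1)) (s : KState) (hs : IsGen k p s) :
    ∃ q c d, IsGen k p q ∧ KTrans k p x y q c = (c, s) ∧ KTrans k p x y q d = (d, .id) := by
  have hb0 : ∃ d, KTrans k p x y (.b 0) d = (d, .id) := by
    refine ⟨max (x (k-1)) (y (p-1)) + 1, ?_⟩
    simp only [KTrans]
    rw [if_neg (by omega), if_neg (by omega)]
  obtain ⟨d, hd⟩ := hb0
  rcases hs with ⟨i, hi, rfl⟩ | ⟨j, hj, rfl⟩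
  · by_cases h : i + 1 < k
    · exact ⟨.a (i+1), x i, x i + 1, Or.inl ⟨_, h, rfl⟩, by simp [KTrans], by simp [KTrans]⟩
    · obtain rfl : i = k - 1 := by omega
      exact ⟨.b 0, x (k-1), d, Or.inr ⟨0, hp, rfl⟩, by simp [KTrans], hd⟩
  · by_cases h : j + 1 < p
    · exact ⟨.b (j+1), y j, y j + 1, Or.inr ⟨_, h, rfl⟩, by simp [KTrans], by simp [KTrans]⟩
    · obtain rfl : j = p - 1 := by omega
      exact ⟨.b 0, y (p-1), d, Or.inr ⟨0, hp, rfl⟩, by simp [KTrans, hxy.symm], hd⟩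

theorem shift_zpow (A : Equiv.Perm (List ℤ)) (hA : ∀ z w, A (z :: w) = (z + 1) :: w) (n : ℤ) :
    ∀ z w, (A ^ n) (z :: w) = (z + n) :: w := by
  induction n with
  | zero => simp
  | succ n ih =>
    intro z w
    rw [zpow_add_one, Equiv.Perm.mul_apply, hA, ih]
    congr 1; ring
  | pred n ih =>
    intro z w
    have : A⁻¹ (z :: w) = (z - 1) :: w := by
      rw [Equiv.Perm.inv_eq_iff_eq, hA]; simp
    rw [zpow_sub_one, Equiv.Perm.mul_apply, this, ih]
    congr 1; ring

open scoped commutatorElement in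
theorem stmt10_aux (k p : ℕ) (hk : 1 ≤ k) (hp : 1 ≤ p) (x y : ℕ → ℤ)
    (hxy : x (k - 1) ≠ y (p - 1)) (z : ℤ) :
    ∀ g ∈ Kgroup k p x y, ∃ h ∈ ⁅Kgroup k p x y, Kgroup k p x y⁆,
      ∀ w : List ℤ, h (z :: w) = z :: g w := by
  intro g hg
  induction hg using Subgroup.closure_induction with
  | one => exact ⟨1, one_mem _, by simp⟩
  | mul g₁ g₂ _ _ h₁ h₂ =>
    obtain ⟨h₁, m₁, e₁⟩ := h₁
    obtain ⟨h₂, m₂, e₂⟩ := h₂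
    exact ⟨h₁ * h₂, mul_mem m₁ m₂, by simp [e₁, e₂]⟩
  | inv g _ h =>
    obtain ⟨h, m, e⟩ := h
    refine ⟨h⁻¹, inv_mem m, fun w => ?_⟩
    rw [Equiv.Perm.inv_eq_iff_eq, e]; simp
  | mem g hg =>
    obtain ⟨s, hs, hgs⟩ := hg
    obtain ⟨q, c, d, hq, hc, hd⟩ := exists_parent k p hk hp x y hxy s hs
    obtain ⟨Q, hQ⟩ := exists_perm k p x y q
    obtain ⟨A, hA⟩ := exists_perm k p x y (.a 0)
    have mQ : Q ∈ Kgroup k p x y := Subgroup.subset_closure ⟨q, hq, hQ⟩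
    have mA : A ∈ Kgroup k p x y :=
      Subgroup.subset_closure ⟨.a 0, Or.inl ⟨0, hk, rfl⟩, hA⟩
    have sA := shift_zpow A (fun z w => by rw [hA]; simp [stateAct, KTrans, stateAct_id])
    have Qc : ∀ w, Q (c :: w) = c :: g w := fun w => by rw [hQ, hgs]; simp [stateAct, hc]
    have Qd : ∀ w, Q⁻¹ (d :: w) = d :: w := fun w => by
      rw [Equiv.Perm.inv_eq_iff_eq, hQ]; simp [stateAct, hd, stateAct_id]
    have hconj : ∀ n : ℤ, A ^ n * Q * (A ^ n)⁻¹ ∈ Kgroup k p x y := fun n =>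
      mul_mem (mul_mem (zpow_mem mA n) mQ) (inv_mem (zpow_mem mA n))
    refine ⟨⁅A ^ (z - c) * Q * (A ^ (z - c))⁻¹, A ^ (c - d)⁆,
      Subgroup.commutator_mem_commutator (hconj _) (zpow_mem mA _), fun w => ?_⟩
    rw [commutatorElement_def]
    simp only [mul_inv_rev, ← zpow_neg, Equiv.Perm.mul_apply, sA]
    rw [show z + -(c - d) + -(z - c) = d by ring, Qd, sA, sA, sA,
      show d + - -(z - c) + (c - d) + -(z - c) = c by ring, Qc, sA]
    congr 1; ring

theorem stmt10 (k p : ℕ) (hk : 1 ≤ k) (hp : 1 ≤ p) (x y : ℕ → ℤ)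
    (hxy : x (k - 1) ≠ y (p - 1)) :
    ∀ z : ℤ, ∀ g ∈ Kgroup k p x y, ∃ h ∈ ⁅Kgroup k p x y, Kgroup k p x y⁆,
      ∀ w : List ℤ, h ([z] ++ w) = h [z] ++ g w := by
  intro z g hg
  obtain ⟨h, m, e⟩ := stmt10_aux k p hk hp x y hxy z g hg
  refine ⟨h, m, fun w => ?_⟩
  have hnil : g [] = [] := by
    clear e m h
    induction hg using Subgroup.closure_induction with
    | one => rfl
    | mul g₁ g₂ _ _ h₁ h₂ => simp [h₁, h₂]
    | inv g _ h => rw [Equiv.Perm.inv_eq_iff_eq, h]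
    | mem g hg => obtain ⟨s, _, hs⟩ := hg; rw [hs]; simp [stateAct]
  rw [e [], hnil]
  simpa using e w
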